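/- With the apparatus fixed, let a and b be integers with b > a ≥ 1. Then there exists a constant C depending at most on s, k, r, t such that I_{a,b}(X) ≤ C(K_{a,b}(X) + M^{2s/3}·I_{a,b+1}(X)). -/

import Mathlib

open Filter MeasureTheory Finset

attribute [local instance] Classical.propDecidable

noncomputable section

/-- Number of integral solutions of the Vinogradov system of degree k
in 2s variables from [1,X]. -/
def Jcount (s k : ℕ) (X : ℝ) : ℕ :=
  Set.ncard {xy : (Fin s → ℤ) × (Fin s → ℤ) |
    (∀ i, 1 ≤ xy.1 i ∧ (xy.1 i : ℝ) ≤ X) ∧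
    (∀ i, 1 ≤ xy.2 i ∧ (xy.2 i : ℝ) ≤ X) ∧
    ∀ j ∈ Finset.Icc 1 k, ∑ i, ((xy.1 i) ^ j - (xy.2 i) ^ j) = 0}

/-- e(z) = exp(2πiz). -/
def ec (z : ℝ) : ℂ := Complex.exp (2 * Real.pi * Complex.I * z)

/-- The unit box [0,1)^k. -/
def box (k : ℕ) : Set (Fin k → ℝ) := Set.univ.pi fun _ => Set.Ico (0:ℝ) 1

/-- The exponential sum f_c(α;ξ), over 1 ≤ x ≤ X with x ≡ ξ (mod p^c). -/
def fexp (k p : ℕ) (X : ℝ) (c : ℕ) (ξ : ℤ) (α : Fin k → ℝ) : ℂ :=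
  ∑ x ∈ (Finset.Icc (1:ℤ) ⌊X⌋).filter (fun x => Int.ModEq ((p:ℤ)^c) x ξ),
    ec (∑ j : Fin k, α j * (x:ℝ)^((j:ℕ)+1))

/-- The set Ξ_c^r(ξ): r-tuples in [1,p^{c+1}], congruent to ξ mod p^c,
pairwise distinct mod p^{c+1}. -/
def XiSet (p r c : ℕ) (ξ : ℤ) : Set (Fin r → ℤ) :=
  {v | (∀ i, 1 ≤ v i ∧ v i ≤ (p:ℤ)^(c+1)) ∧
       (∀ i, Int.ModEq ((p:ℤ)^c) (v i) ξ) ∧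
       Function.Injective fun i => ((v i : ZMod (p^(c+1))))}

/-- The conditioned exponential sum F_c(α;ξ). -/
def Fexp (k p r : ℕ) (X : ℝ) (c : ℕ) (ξ : ℤ) (α : Fin k → ℝ) : ℂ :=
  ∑ᶠ v ∈ XiSet p r c ξ, ∏ i, fexp k p X (c+1) (v i) α

/-- The mean value I_{a,b}(X;ξ,η). -/
def Iab (k p r s : ℕ) (X : ℝ) (a b : ℕ) (ξ η : ℤ) : ℝ :=
  ∫ α in box k, ‖Fexp k p r X a ξ α‖^2 * ‖fexp k p X b η α‖^(2*s)

/-- The mean value K_{a,b}(X;ξ,η). -/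
def Kab (k p r t : ℕ) (X : ℝ) (a b : ℕ) (ξ η : ℤ) : ℝ :=
  ∫ α in box k, ‖Fexp k p r X a ξ α‖^2 * ‖Fexp k p r X b η α‖^(2*t)

/-- I_{a,b}(X): the maximum of I_{a,b}(X;ξ,η) over admissible ξ, η. -/
def Imax (k p r s : ℕ) (X : ℝ) (a b : ℕ) : ℝ :=
  sSup {v : ℝ | ∃ ξ η : ℤ, 1 ≤ ξ ∧ ξ ≤ (p:ℤ)^a ∧ 1 ≤ η ∧ η ≤ (p:ℤ)^b ∧
    ¬ Int.ModEq (p:ℤ) η ξ ∧ v = Iab k p r s X a b ξ η}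

/-- The set Ξ(η) of members of Ξ_0^r(0) avoiding the class of η mod p. -/
def XiTilde (p r : ℕ) (η : ℤ) : Set (Fin r → ℤ) :=
  {v | v ∈ XiSet p r 0 0 ∧ ∀ i, ¬ Int.ModEq (p:ℤ) (v i) η}

/-- The pre-conditioned sum F(α;η). -/
def Ftilde (k p r : ℕ) (X : ℝ) (η : ℤ) (α : Fin k → ℝ) : ℂ :=
  ∑ᶠ v ∈ XiTilde p r η, ∏ i, fexp k p X 1 (v i) α

/-- The mean value K̃_c(X;η). -/
def Ktilde (k p r t : ℕ) (X : ℝ) (c : ℕ) (η : ℤ) : ℝ :=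
  ∫ α in box k, ‖Ftilde k p r X η α‖^2 * ‖Fexp k p r X c η α‖^(2*t)

/-- K_{a,b}(X): for a ≥ 1 the maximum of K_{a,b}(X;ξ,η) over admissible ξ, η;
for a = 0 the pre-congruencing quantity K_{0,b}(X) = max_η K̃_b(X;η). -/
def Kmax (k p r t : ℕ) (X : ℝ) (a b : ℕ) : ℝ :=
  if a = 0 then sSup {v : ℝ | ∃ η : ℤ, 1 ≤ η ∧ η ≤ (p:ℤ)^b ∧ v = Ktilde k p r t X b η}
  else sSup {v : ℝ | ∃ ξ η : ℤ, 1 ≤ ξ ∧ ξ ≤ (p:ℤ)^a ∧ 1 ≤ η ∧ η ≤ (p:ℤ)^b ∧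
    ¬ Int.ModEq (p:ℤ) η ξ ∧ v = Kab k p r t X a b ξ η}

/-- λ = limsup_{Y→∞} log J_{sr,k}(Y)/log Y. -/
def lamExp (k sr : ℕ) : ℝ :=
  Filter.limsup (fun Y : ℝ => Real.log ((Jcount sr k Y : ℝ)) / Real.log Y) Filter.atTop

/-- θ = (16t)^{-N-1}. -/
def thetaC (t N : ℕ) : ℝ := (16*(t:ℝ)) ^ (-((N:ℝ)+1))

/-- δ = θ/(1000 N t^N). -/
def deltaC (t N : ℕ) : ℝ := thetaC t N / (1000 * (N:ℝ) * (t:ℝ)^N)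

/-- M = X^θ. -/
def Mval (t N : ℕ) (X : ℝ) : ℝ := X ^ thetaC t N

/-- κ = r(t+1) - (1/2)(t+r-k)(t+r-k-1+(2r-2)/(t-1)). -/
def kappa (k r t : ℕ) : ℝ :=
  (r : ℝ) * ((t : ℝ) + 1) -
    (1/2) * ((t : ℝ) + r - k) * ((t : ℝ) + r - k - 1 + (2*(r:ℝ) - 2)/((t:ℝ) - 1))

/-- Λ = λ - 2(s+r) + κ, with s = rt. -/
def LamC (k r t : ℕ) : ℝ := lamExp k (r*(t+1)) - 2*((r*(t+1) : ℕ) : ℝ) + kappa k r t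

/-- The normalised mean value ⟦K_{a,b}(X)⟧ = K_{a,b}(X) (X/M^b)^{-2s} (X/M^a)^{κ-2r}. -/
def normK (k p r t N : ℕ) (X : ℝ) (a b : ℕ) : ℝ :=
  Kmax k p r t X a b * (X / (Mval t N X)^b) ^ (-(2*((r*t : ℕ):ℝ))) *
    (X / (Mval t N X)^a) ^ (kappa k r t - 2*(r:ℝ))

/-- μ = (1/2)(t+r-k)(t+r-k-1). -/
def muC (k r t : ℕ) : ℝ := (1/2) * ((t:ℝ)+r-k) * ((t:ℝ)+r-k-1)

/-- ν = (1/2)(t+r-k)(k+r-t-1). -/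
def nuC (k r t : ℕ) : ℝ := (1/2) * ((t:ℝ)+r-k) * ((k:ℝ)+r-t-1)


/-- The character `α ↦ e(α · n)` of the torus attached to an integral frequency `n`. -/
def expChar {k : ℕ} (n : Fin k → ℤ) : (Fin k → ℝ) → ℂ := fun α => ec (∑ j, α j * n j)

lemma ec_zero : ec 0 = 1 := by simp [ec]

lemma ec_add (x y : ℝ) : ec (x + y) = ec x * ec y := by
  simp only [ec, ← Complex.exp_add]
  push_cast
  ring_nf

lemma star_ec (x : ℝ) : star (ec x) = ec (-x) := by
  simp only [ec, Complex.star_def, ← Complex.exp_conj, map_mul, Complex.conj_I, Complex.conj_ofReal,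
    Complex.conj_ofNat, Complex.ofReal_neg]
  ring_nf

lemma continuous_ec : Continuous ec := by
  unfold ec
  fun_prop

lemma expChar_zero (k : ℕ) : expChar (0 : Fin k → ℤ) = 1 := by
  ext α
  simp [expChar, ec_zero]

lemma expChar_add {k : ℕ} (m n : Fin k → ℤ) : expChar (m + n) = expChar m * expChar n := by
  ext α
  simp [expChar, ← ec_add, mul_add, Finset.sum_add_distrib]

lemma star_expChar {k : ℕ} (n : Fin k → ℤ) : star (expChar n) = expChar (-n) := by
  ext α
  simp [expChar, star_ec]

lemma continuous_expChar {k : ℕ} (n : Fin k → ℤ) : Continuous (expChar n) :=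
  continuous_ec.comp (by fun_prop)

lemma setIntegral_ec_mul_int (n : ℤ) :
    ∫ x in Set.Ico (0 : ℝ) 1, ec (x * n) = if n = 0 then 1 else 0 := by
  rw [integral_Ico_eq_integral_Ioc, ← intervalIntegral.integral_of_le zero_le_one]
  split_ifs with hn
  · simp [hn, ec_zero]
  · have hc : (2 * Real.pi * Complex.I * n : ℂ) ≠ 0 := by
      simp [hn, Real.pi_ne_zero]
    have h := integral_exp_mul_complex (a := 0) (b := 1) hc
    have h1 : Complex.exp (2 * Real.pi * Complex.I * n) = 1 := by
      rw [mul_comm]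
      exact Complex.exp_int_mul_two_pi_mul_I n
    simp only [Complex.ofReal_one, mul_one, h1, Complex.ofReal_zero, mul_zero, Complex.exp_zero,
      sub_self, zero_div] at h
    rw [← h]
    refine intervalIntegral.integral_congr fun x _ => ?_
    simp only [ec]
    push_cast
    ring_nf

lemma ec_sum {ι : Type*} (s : Finset ι) (f : ι → ℝ) : ec (∑ i ∈ s, f i) = ∏ i ∈ s, ec (f i) := by
  induction s using Finset.induction_on with
  | empty => simp [ec_zero]
  | insert a s ha ih => rw [Finset.sum_insert ha, Finset.prod_insert ha, ec_add, ih]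

lemma setIntegral_box_expChar {k : ℕ} (n : Fin k → ℤ) :
    ∫ α in box k, expChar n α = if n = 0 then 1 else 0 := by
  have h : ∀ α, expChar n α = ∏ j, ec (α j * n j) := fun α => ec_sum _ _
  simp_rw [h]
  have hbox : box k = Set.univ.pi fun _ => Set.Ico (0 : ℝ) 1 := rfl
  rw [hbox, volume_pi, Measure.restrict_pi_pi,
    integral_fintype_prod_eq_prod (f := fun j (x : ℝ) => ec (x * n j))]
  simp_rw [setIntegral_ec_mul_int]
  rw [Finset.prod_ite_zero]
  simp [funext_iff]

/-- The multiplicative monoid of characters of the `k`-dimensional torus. -/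
def charMonoid (k : ℕ) : Submonoid ((Fin k → ℝ) → ℂ) where
  carrier := Set.range expChar
  one_mem' := ⟨0, expChar_zero k⟩
  mul_mem' := by
    rintro _ _ ⟨m, rfl⟩ ⟨n, rfl⟩
    exact ⟨m + n, expChar_add m n⟩

/-- Trigonometric polynomials whose coefficients are natural numbers. -/
def natTrigPoly (k : ℕ) : Subsemiring ((Fin k → ℝ) → ℂ) := (charMonoid k).subsemiringClosure

lemma expChar_mem_natTrigPoly {k : ℕ} (n : Fin k → ℤ) : expChar n ∈ natTrigPoly k :=
  AddSubmonoid.subset_closure ⟨n, rfl⟩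

@[elab_as_elim]
lemma natTrigPoly_induction {k : ℕ} {P : (f : (Fin k → ℝ) → ℂ) → f ∈ natTrigPoly k → Prop}
    (char : ∀ n, P (expChar n) (expChar_mem_natTrigPoly n)) (zero : P 0 (zero_mem _))
    (add : ∀ f g hf hg, P f hf → P g hg → P (f + g) (add_mem hf hg))
    {f : (Fin k → ℝ) → ℂ} (hf : f ∈ natTrigPoly k) : P f hf := by
  refine AddSubmonoid.closure_induction (s := (charMonoid k : Set ((Fin k → ℝ) → ℂ)))
    ?_ zero (fun f g hf hg => add f g hf hg) hf
  rintro _ ⟨n, rfl⟩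
  exact char n

lemma star_mem_natTrigPoly {k : ℕ} {f : (Fin k → ℝ) → ℂ} (hf : f ∈ natTrigPoly k) :
    star f ∈ natTrigPoly k := by
  induction hf using natTrigPoly_induction with
  | char n =>
    rw [star_expChar]
    exact expChar_mem_natTrigPoly _
  | zero =>
    rw [star_zero]
    exact zero_mem _
  | add f g _ _ hf hg =>
    rw [star_add]
    exact add_mem hf hg

lemma continuous_of_mem_natTrigPoly {k : ℕ} {f : (Fin k → ℝ) → ℂ} (hf : f ∈ natTrigPoly k) :
    Continuous f := by
  induction hf using natTrigPoly_induction with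
  | char n => exact continuous_expChar n
  | zero => exact continuous_const
  | add f g _ _ hf hg => exact hf.add hg

lemma integrableOn_box {k : ℕ} {E : Type*} [NormedAddCommGroup E] {f : (Fin k → ℝ) → E}
    (hf : Continuous f) : IntegrableOn f (box k) := by
  refine (hf.continuousOn.integrableOn_compact (isCompact_Icc (a := 0) (b := 1))).mono_set ?_
  intro α hα
  exact ⟨fun j => (hα j trivial).1, fun j => (hα j trivial).2.le⟩

/-- Orthogonality: the mean value of a trigonometric polynomial with coefficients in `ℕ` is its
constant coefficient, so is nonnegative. -/
lemma re_setIntegral_box_nonneg {k : ℕ} {f : (Fin k → ℝ) → ℂ} (hf : f ∈ natTrigPoly k) :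
    0 ≤ (∫ α in box k, f α).re := by
  induction hf using natTrigPoly_induction with
  | char n =>
    rw [setIntegral_box_expChar]
    split_ifs <;> simp
  | zero => simp
  | add f g hf' hg' hf hg =>
    simp only [Pi.add_apply]
    rw [integral_add (integrableOn_box (continuous_of_mem_natTrigPoly hf'))
      (integrableOn_box (continuous_of_mem_natTrigPoly hg')), Complex.add_re]
    exact add_nonneg hf hg

lemma fexp_mem_natTrigPoly (k p : ℕ) (X : ℝ) (c : ℕ) (ξ : ℤ) :
    fexp k p X c ξ ∈ natTrigPoly k := by
  have h : fexp k p X c ξ =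
      ∑ x ∈ (Finset.Icc (1:ℤ) ⌊X⌋).filter (fun x => Int.ModEq ((p:ℤ)^c) x ξ),
        expChar (fun j : Fin k => x ^ ((j : ℕ) + 1)) := by
    ext α
    simp [fexp, expChar]
  rw [h]
  exact sum_mem fun x _ => expChar_mem_natTrigPoly _

/-- The residues in `[1, p^{c+1}]` lying above the class of `ξ` modulo `p^c`. -/
def liftClasses (p c : ℕ) (ξ : ℤ) : Finset ℤ :=
  (Finset.Icc 1 ((p : ℤ) ^ (c + 1))).filter (fun x => Int.ModEq ((p : ℤ) ^ c) x ξ)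

lemma mem_liftClasses {p c : ℕ} {ξ x : ℤ} :
    x ∈ liftClasses p c ξ ↔ (1 ≤ x ∧ x ≤ (p : ℤ) ^ (c + 1)) ∧ Int.ModEq ((p : ℤ) ^ c) x ξ := by
  simp [liftClasses]

lemma eq_of_modEq_of_mem_Icc {q x y : ℤ} (hx : 1 ≤ x ∧ x ≤ q) (hy : 1 ≤ y ∧ y ≤ q)
    (h : Int.ModEq q x y) : x = y := by
  have h1 : Int.ModEq q (x - 1) (y - 1) := h.sub_right 1
  have h2 := h1.eq
  rw [Int.emod_eq_of_lt (by lia) (by lia), Int.emod_eq_of_lt (by lia) (by lia)] at h2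
  lia

lemma card_liftClasses_le {p : ℕ} (hp : 0 < p) (c : ℕ) (ξ : ℤ) : #(liftClasses p c ξ) ≤ p := by
  have hq : (0 : ℤ) < (p : ℤ) ^ c := by positivity
  have h : #(liftClasses p c ξ) ≤ #(Finset.Ico (0 : ℤ) p) := by
    refine Finset.card_le_card_of_injOn (fun x => (x - 1) / (p : ℤ) ^ c) ?_ ?_
    · intro x hx
      have hx' := (mem_liftClasses.1 hx).1
      simp only [Finset.coe_Ico, Set.mem_Ico]
      refine ⟨Int.ediv_nonneg (by lia) hq.le, Int.ediv_lt_of_lt_mul hq ?_⟩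
      rw [← pow_succ']
      lia
    · intro x hx y hy hxy
      have hx' := (mem_liftClasses.1 hx).2.trans (mem_liftClasses.1 hy).2.symm
      have h2 := (hx'.sub_right 1).eq
      have h3 := Int.emod_add_mul_ediv (x - 1) ((p : ℤ) ^ c)
      have h4 := Int.emod_add_mul_ediv (y - 1) ((p : ℤ) ^ c)
      simp only at hxy
      rw [hxy, h2, h4] at h3
      lia
  simpa using h

lemma fexp_eq_sum_liftClasses (k : ℕ) {p : ℕ} (hp : 0 < p) (X : ℝ) (c : ℕ) (ξ : ℤ) :
    fexp k p X c ξ = ∑ ζ : liftClasses p c ξ, fexp k p X (c + 1) ζ := by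
  have hq : (0 : ℤ) < (p : ℤ) ^ (c + 1) := by positivity
  have hdvd : (p : ℤ) ^ c ∣ (p : ℤ) ^ (c + 1) := pow_dvd_pow _ (Nat.le_succ c)
  have key : ∀ x : ℤ, Int.ModEq ((p : ℤ) ^ (c + 1)) ((x - 1) % (p : ℤ) ^ (c + 1) + 1) x :=
    fun x => by simpa using (Int.mod_modEq (x - 1) ((p : ℤ) ^ (c + 1))).add_right 1
  have range : ∀ x : ℤ, 1 ≤ (x - 1) % (p : ℤ) ^ (c + 1) + 1 ∧
      (x - 1) % (p : ℤ) ^ (c + 1) + 1 ≤ (p : ℤ) ^ (c + 1) := fun x => by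
    have h1 := Int.emod_nonneg (x - 1) hq.ne'
    have h2 := Int.emod_lt_of_pos (x - 1) hq
    lia
  ext α
  rw [Finset.sum_apply,
    Finset.sum_coe_sort (liftClasses p c ξ) (fun ζ : ℤ => fexp k p X (c + 1) ζ α)]
  simp only [fexp]
  rw [← Finset.sum_fiberwise_of_maps_to (t := liftClasses p c ξ)
    (g := fun x => (x - 1) % (p : ℤ) ^ (c + 1) + 1)]
  · refine Finset.sum_congr rfl fun ζ hζ => Finset.sum_congr ?_ fun _ _ => rfl
    have hζ' := mem_liftClasses.1 hζ
    ext x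
    simp only [Finset.mem_filter]
    constructor
    · rintro ⟨⟨hx, _⟩, rfl⟩
      exact ⟨hx, (key x).symm⟩
    · rintro ⟨hx, hxζ⟩
      exact ⟨⟨hx, (hxζ.of_dvd hdvd).trans hζ'.2⟩,
        eq_of_modEq_of_mem_Icc (range x) hζ'.1 ((key x).trans hxζ)⟩
  · intro x hx
    exact mem_liftClasses.2 ⟨range x, ((key x).of_dvd hdvd).trans (Finset.mem_filter.1 hx).2⟩

/-- The sum of `∏ g (u i)` over the tuples `u` satisfying `Q`. -/
def condSum {R ι κ : Type*} [CommSemiring R] [Fintype ι] [Fintype κ] (g : ι → R)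
    (Q : (κ → ι) → Prop) : R :=
  ∑ u ∈ (Finset.univ : Finset (κ → ι)).filter Q, ∏ i, g (u i)

lemma pow_card_eq_sum {R ι σ : Type*} [CommSemiring R] [Fintype ι] [Fintype σ] (g : ι → R) :
    (∑ i, g i) ^ Fintype.card σ = ∑ v : σ → ι, ∏ i, g (v i) := by
  rw [← Fintype.piFinset_univ, ← Finset.prod_univ_sum]
  simp

lemma condSum_sum {R ι κ τ σ : Type*} [CommSemiring R] [Fintype ι] [Fintype κ] [Fintype τ]
    [Fintype σ] (g : ι → R) (e : κ ⊕ τ ≃ σ) (Q : (κ → ι) → Prop) :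
    condSum g (fun v : σ → ι => Q fun i => v (e (Sum.inl i))) =
      condSum g Q * (∑ i, g i) ^ Fintype.card τ := by
  simp only [condSum, Finset.sum_filter]
  rw [pow_card_eq_sum, Finset.sum_mul_sum, ← Fintype.sum_prod_type']
  refine Fintype.sum_equiv
    ((e.symm.arrowCongr (Equiv.refl ι)).trans (Equiv.sumArrowEquivProdArrow _ _ _)) _ _ fun v => ?_
  rw [← Equiv.prod_comp e, Fintype.prod_sum_type, ite_mul, zero_mul]
  rfl

/-- Prescribing a condition `Q` on the coordinates indexed by `κ` factors the power `(∑ g)^σ`. -/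
lemma condSum_restrict {R ι κ σ : Type*} [CommSemiring R] [Fintype ι] [Fintype κ] [Fintype σ]
    (g : ι → R) (ρ : κ ↪ σ) (Q : (κ → ι) → Prop) :
    condSum g (fun v : σ → ι => Q (v ∘ ρ)) =
      condSum g Q * (∑ i, g i) ^ (Fintype.card σ - Fintype.card κ) := by
  let e : κ ⊕ ↥(Set.range ρ)ᶜ ≃ σ :=
    ((Equiv.ofInjective ρ ρ.injective).sumCongr (Equiv.refl _)).trans (Equiv.Set.sumCompl _)
  have hcard : Fintype.card ↥(Set.range ρ)ᶜ = Fintype.card σ - Fintype.card κ := by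
    have h := Fintype.card_congr e
    rw [Fintype.card_sum] at h
    lia
  rw [← hcard]
  exact condSum_sum g e Q

/-- Among at least `2r` objects distributed over classes, either some `r` lie in distinct classes
or some three lie in the same class. -/
lemma exists_injective_or_three_eq {ι σ : Type*} [Fintype σ] {r : ℕ}
    (hs : 2 * r ≤ Fintype.card σ) (v : σ → ι) :
    (∃ ρ : Fin r ↪ σ, Function.Injective (v ∘ ρ)) ∨
      ∃ τ : Fin 3 ↪ σ, ∀ i j, (v ∘ τ) i = (v ∘ τ) j := by
  by_cases h : r ≤ #(Finset.univ.image v)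
  · left
    obtain ⟨T, hT, hTr⟩ := Finset.exists_subset_card_eq h
    let e := (T.equivFinOfCardEq hTr).symm
    have hmem : ∀ i : Fin r, ∃ x, v x = e i := fun i => by
      simpa using hT (e i).2
    choose w hw using hmem
    have hinj : Function.Injective (v ∘ w) := fun i j hij => by
      simp only [Function.comp_apply, hw] at hij
      exact e.injective (Subtype.ext hij)
    exact ⟨⟨w, hinj.of_comp⟩, hinj⟩
  · right
    obtain ⟨y, -, hy⟩ := Finset.exists_lt_card_fiber_of_mul_lt_card_of_maps_to
      (s := Finset.univ) (t := Finset.univ.image v) (f := v) (n := 2)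
      (fun a _ => Finset.mem_image_of_mem _ (Finset.mem_univ a)) (by
        rw [Finset.card_univ]
        lia)
    obtain ⟨T, hT, hT3⟩ := Finset.exists_subset_card_eq (Nat.succ_le_of_lt hy)
    let w := (T.equivFinOfCardEq hT3).symm
    have hw : ∀ i, v (w i) = y := fun i => (Finset.mem_filter.1 (hT (w i).2)).2
    exact ⟨w.toEmbedding.trans (Function.Embedding.subtype _), fun i j => (hw i).trans (hw j).symm⟩

lemma condSum_const {R ι κ : Type*} [CommSemiring R] [Fintype ι] [Fintype κ] [Nonempty κ]
    (g : ι → R) :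
    condSum g (fun u : κ → ι => ∀ i j, u i = u j) = ∑ i, g i ^ Fintype.card κ := by
  obtain ⟨o⟩ := ‹Nonempty κ›
  rw [condSum]
  refine (Finset.sum_bij (fun x _ _ => x) ?_ ?_ ?_ ?_).symm
  · intro x _
    simp
  · intro x _ y _ h
    exact congrFun h o
  · intro u hu
    have hu' : ∀ i j, u i = u j := by simpa using hu
    exact ⟨u o, Finset.mem_univ _, funext fun i => hu' o i⟩
  · intro x _
    simp

/-- With respect to the ordering defined by a subsemiring `A`, the power `(∑ g)^σ` is at most the
sum of the contributions of any family of conditions covering all tuples. -/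
lemma exists_pow_add_eq_sum_condSum {R ι σ β : Type*} [CommSemiring R] [Fintype ι] [Fintype σ]
    [Fintype β] (A : Subsemiring R) (g : ι → R) (hg : ∀ i, g i ∈ A) (P : β → (σ → ι) → Prop)
    (hP : ∀ v, ∃ b, P b v) :
    ∃ D ∈ A, (∑ i, g i) ^ Fintype.card σ + D = ∑ b, condSum g (P b) := by
  let c : (σ → ι) → ℕ := fun v => #(Finset.univ.filter fun b => P b v)
  have hc : ∀ v, 1 ≤ c v := fun v => by
    obtain ⟨b, hb⟩ := hP v
    exact Finset.card_pos.2 ⟨b, by simpa using hb⟩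
  refine ⟨∑ v : σ → ι, (c v - 1) • ∏ i, g (v i),
    sum_mem fun v _ => nsmul_mem (prod_mem fun i _ => hg _) _, ?_⟩
  simp only [condSum, Finset.sum_filter]
  rw [pow_card_eq_sum, Finset.sum_comm, ← Finset.sum_add_distrib]
  refine Finset.sum_congr rfl fun v _ => ?_
  rw [← Finset.sum_filter, Finset.sum_const, ← succ_nsmul', Nat.sub_add_cancel (hc v)]

/-- With respect to the ordering defined by a subsemiring `A`, the power `(∑ g)^σ` is at most the
contribution of tuples with `r` distinct classes plus that of tuples with three equal classes. -/
lemma exists_pow_add_eq {R ι σ : Type*} [CommSemiring R] [Fintype ι] [Fintype σ]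
    (A : Subsemiring R) (g : ι → R) (hg : ∀ i, g i ∈ A) {r : ℕ} (hs : 2 * r ≤ Fintype.card σ) :
    ∃ D ∈ A, (∑ i, g i) ^ Fintype.card σ + D =
      Nat.card (Fin r ↪ σ) • (condSum g (fun u : Fin r → ι => Function.Injective u) *
        (∑ i, g i) ^ (Fintype.card σ - r)) +
      Nat.card (Fin 3 ↪ σ) • ((∑ i, g i ^ 3) * (∑ i, g i) ^ (Fintype.card σ - 3)) := by
  obtain ⟨D, hD, h⟩ := exists_pow_add_eq_sum_condSum A g hg
    (Sum.elim (fun (ρ : Fin r ↪ σ) (v : σ → ι) => Function.Injective (v ∘ ρ))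
      (fun (τ : Fin 3 ↪ σ) (v : σ → ι) => ∀ i j, (v ∘ τ) i = (v ∘ τ) j)) fun v => by
        simpa using exists_injective_or_three_eq hs v
  refine ⟨D, hD, h.trans ?_⟩
  rw [Fintype.sum_sum_type]
  simp only [Sum.elim_inl, Sum.elim_inr]
  rw [Finset.sum_congr rfl fun ρ _ => condSum_restrict g ρ (fun u => Function.Injective u),
    Finset.sum_congr rfl fun τ _ => condSum_restrict g τ (fun u => ∀ i j, u i = u j), condSum_const]
  simp

lemma Fexp_eq_condSum (k p r : ℕ) (X : ℝ) (c : ℕ) (ξ : ℤ) :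
    Fexp k p r X c ξ = condSum (fun ζ : liftClasses p c ξ => fexp k p X (c + 1) ζ)
      (fun u : Fin r → liftClasses p c ξ => Function.Injective u) := by
  have himage : XiSet p r c ξ = (fun (u : Fin r → liftClasses p c ξ) i => (u i : ℤ)) ''
      (Finset.univ.filter fun u : Fin r → liftClasses p c ξ => Function.Injective u) := by
    ext v
    simp only [Finset.coe_filter, Finset.mem_univ, true_and, Set.mem_image, Set.mem_ofPred_eq]
    constructor
    · rintro ⟨h1, h2, h3⟩
      refine ⟨fun i => ⟨v i, mem_liftClasses.2 ⟨h1 i, h2 i⟩⟩, fun i j hij => h3 ?_, rfl⟩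
      simpa using congrArg (fun z : liftClasses p c ξ => ((z : ℤ) : ZMod (p ^ (c + 1)))) hij
    · rintro ⟨u, hu, rfl⟩
      have hm := fun i => mem_liftClasses.1 (u i).2
      refine ⟨fun i => (hm i).1, fun i => (hm i).2, fun i j hij => hu (Subtype.ext ?_)⟩
      refine eq_of_modEq_of_mem_Icc (hm i).1 (hm j).1 ?_
      simpa using (ZMod.intCast_eq_intCast_iff _ _ _).1 hij
  ext α
  rw [Fexp, himage, finsum_mem_image, finsum_mem_coe_finset, condSum, Finset.sum_apply]
  · refine Finset.sum_congr (by congr!) fun u _ => ?_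
    simp
  · intro u _ v _ huv
    ext i
    exact congrFun huv i

lemma Fexp_mem_natTrigPoly (k p r : ℕ) (X : ℝ) (c : ℕ) (ξ : ℤ) :
    Fexp k p r X c ξ ∈ natTrigPoly k := by
  rw [Fexp_eq_condSum]
  exact sum_mem fun u _ => prod_mem fun i _ => fexp_mem_natTrigPoly _ _ _ _ _

/-- A weighted Young inequality, with a prescribed small coefficient. -/
lemma exists_mul_pow_le (N : ℝ) (hN : 0 ≤ N) {m n : ℕ} (hm : 1 ≤ m) (hmn : m ≤ n) :
    ∃ C : ℝ, 0 ≤ C ∧ ∀ x y : ℝ, 0 ≤ x → 0 ≤ y →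
      N * (y * x ^ (n - m)) ≤ 1 / 4 * x ^ n + C * y ^ ((n : ℝ) / m) := by
  have hm0 : (0 : ℝ) < m := by exact_mod_cast hm
  have hsub : ((n - m : ℕ) : ℝ) = n - m := by push_cast [hmn]; ring
  have hexp : 0 ≤ ((n - m : ℕ) : ℝ) / m := by positivity
  refine ⟨N * (4 * N) ^ (((n - m : ℕ) : ℝ) / m), by positivity, fun x y hx hy => ?_⟩
  have hxn : x ^ n = x ^ m * x ^ (n - m) := by rw [← pow_add]; congr 1; lia
  by_cases h : 4 * N * y ≤ x ^ m
  · have h1 : 0 ≤ N * (4 * N) ^ (((n - m : ℕ) : ℝ) / m) * y ^ ((n : ℝ) / m) := by positivity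
    have h2 := mul_le_mul_of_nonneg_right h (pow_nonneg hx (n - m))
    rw [hxn]
    linarith
  · have h1 : x ^ (n - m) ≤ (4 * N * y) ^ (((n - m : ℕ) : ℝ) / m) := by
      have h2 : x ^ (n - m) = (x ^ m) ^ (((n - m : ℕ) : ℝ) / m) := by
        rw [← Real.rpow_natCast x m, ← Real.rpow_mul hx, mul_div_cancel₀ _ hm0.ne',
          Real.rpow_natCast]
      rw [h2]
      exact Real.rpow_le_rpow (by positivity) (not_le.1 h).le hexp
    have h3 : y * y ^ (((n - m : ℕ) : ℝ) / m) = y ^ ((n : ℝ) / m) := by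
      rcases hy.eq_or_lt with rfl | hy'
      · rw [zero_mul, Real.zero_rpow]
        have : (0 : ℝ) < n := by exact_mod_cast hm.trans hmn
        positivity
      · nth_rewrite 1 [← Real.rpow_one y]
        rw [← Real.rpow_add hy', hsub]
        congr 1
        field_simp
        ring
    rw [Real.mul_rpow (by positivity) hy] at h1
    have h4 : N * (y * x ^ (n - m)) ≤
        N * (4 * N) ^ (((n - m : ℕ) : ℝ) / m) * y ^ ((n : ℝ) / m) := by
      rw [← h3]
      calc N * (y * x ^ (n - m)) ≤ N * (y * ((4 * N) ^ (((n - m : ℕ) : ℝ) / m) *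
            y ^ (((n - m : ℕ) : ℝ) / m))) := by gcongr
        _ = _ := by ring
    have h5 : 0 ≤ 1 / 4 * x ^ n := by positivity
    linarith

lemma norm_sum_pow_three_rpow_le {ι : Type*} [Fintype ι] {p s : ℕ} (hcard : Fintype.card ι ≤ p)
    (hs : 2 ≤ s) (g : ι → ℂ) :
    ‖∑ i, g i ^ 3‖ ^ (((2 * s : ℕ) : ℝ) / (3 : ℕ)) ≤
      (p : ℝ) ^ (2 * (s : ℝ) / 3 - 1) * ∑ i, ‖g i‖ ^ (2 * s) := by
  have hs' : (2 : ℝ) ≤ s := by exact_mod_cast hs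
  have hexp : (((2 * s : ℕ) : ℝ) / (3 : ℕ)) = 2 * (s : ℝ) / 3 := by push_cast; ring
  rw [hexp]
  have h1 : ‖∑ i, g i ^ 3‖ ≤ ∑ i, ‖g i‖ ^ 3 := by
    simp_rw [← norm_pow]
    exact norm_sum_le _ _
  have h2 : ∀ i, (‖g i‖ ^ 3) ^ (2 * (s : ℝ) / 3) = ‖g i‖ ^ (2 * s) := fun i => by
    rw [← Real.rpow_natCast _ 3, ← Real.rpow_mul (norm_nonneg _), ← Real.rpow_natCast _ (2 * s)]
    congr 1
    push_cast
    ring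
  calc ‖∑ i, g i ^ 3‖ ^ (2 * (s : ℝ) / 3) ≤ (∑ i, ‖g i‖ ^ 3) ^ (2 * (s : ℝ) / 3) :=
        Real.rpow_le_rpow (norm_nonneg _) h1 (by positivity)
    _ ≤ ((Finset.univ : Finset ι).card : ℝ) ^ (2 * (s : ℝ) / 3 - 1) *
          ∑ i, (‖g i‖ ^ 3) ^ (2 * (s : ℝ) / 3) :=
        Real.rpow_sum_le_const_mul_sum_rpow_of_nonneg _ (by linarith) fun i _ => by positivity
    _ ≤ _ := by
        simp_rw [h2]
        refine mul_le_mul_of_nonneg_right ?_ (Finset.sum_nonneg fun i _ => by positivity)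
        exact Real.rpow_le_rpow (Nat.cast_nonneg _) (by exact_mod_cast hcard) (by linarith)

/-- Pointwise bound for the terms arising from the conditioning of `f^s`, with `s = rt`. -/
lemma exists_conditioning_pointwise {r t : ℕ} (hr : 1 ≤ r) (ht : 2 ≤ t) (N₁ N₂ : ℕ) :
    ∃ C : ℝ, 0 ≤ C ∧ ∀ (p : ℕ) (ι : Type) [Fintype ι], Fintype.card ι ≤ p →
      ∀ (g : ι → ℂ) (x y : ℝ), 0 ≤ x → 0 ≤ y →
        N₁ * (y * x ^ (2 * (r * t) - r)) + N₂ * (‖∑ i, g i ^ 3‖ * x ^ (2 * (r * t) - 3)) ≤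
          1 / 2 * x ^ (2 * (r * t)) + C * (y ^ (2 * t) +
            (p : ℝ) ^ (2 * ((r * t : ℕ) : ℝ) / 3 - 1) * ∑ i, ‖g i‖ ^ (2 * (r * t))) := by
  have hs : 2 ≤ r * t := by nlinarith
  obtain ⟨C₁, hC₁, h₁⟩ := exists_mul_pow_le (N₁ : ℝ) (Nat.cast_nonneg _) hr
    (n := 2 * (r * t)) (by nlinarith)
  obtain ⟨C₂, hC₂, h₂⟩ := exists_mul_pow_le (N₂ : ℝ) (Nat.cast_nonneg _) (m := 3) (by norm_num)
    (n := 2 * (r * t)) (by lia)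
  have hexp : ((2 * (r * t) : ℕ) : ℝ) / r = (2 * t : ℕ) := by
    have : (r : ℝ) ≠ 0 := by positivity
    push_cast
    field_simp
  refine ⟨C₁ + C₂, by positivity, fun p ι _ hcard g x y hx hy => ?_⟩
  have e₁ := h₁ x y hx hy
  have e₂ := h₂ x ‖∑ i, g i ^ 3‖ hx (norm_nonneg _)
  rw [hexp, Real.rpow_natCast] at e₁
  have e₃ := mul_le_mul_of_nonneg_left (norm_sum_pow_three_rpow_le hcard hs g) hC₂
  set W := (p : ℝ) ^ (2 * ((r * t : ℕ) : ℝ) / 3 - 1) * ∑ i, ‖g i‖ ^ (2 * (r * t))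
  have hW : 0 ≤ W := mul_nonneg (by positivity) (Finset.sum_nonneg fun i _ => by positivity)
  have e₄ : 0 ≤ C₁ * W := by positivity
  have e₅ : 0 ≤ C₂ * y ^ (2 * t) := by positivity
  linarith

lemma continuous_fexp (k p : ℕ) (X : ℝ) (c : ℕ) (ξ : ℤ) : Continuous (fexp k p X c ξ) :=
  continuous_of_mem_natTrigPoly (fexp_mem_natTrigPoly k p X c ξ)

lemma continuous_Fexp (k p r : ℕ) (X : ℝ) (c : ℕ) (ξ : ℤ) : Continuous (Fexp k p r X c ξ) :=
  continuous_of_mem_natTrigPoly (Fexp_mem_natTrigPoly k p r X c ξ)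

lemma exists_Iab_le (k : ℕ) {r t : ℕ} (hr : 1 ≤ r) (ht : 2 ≤ t) :
    ∃ C : ℝ, 0 ≤ C ∧ ∀ (X : ℝ) (p : ℕ), 0 < p → ∀ (a b : ℕ) (ξ η : ℤ),
      Iab k p r (r * t) X a b ξ η ≤ C * (Kab k p r t X a b ξ η +
        (p : ℝ) ^ (2 * ((r * t : ℕ) : ℝ) / 3 - 1) *
          ∑ ζ : liftClasses p b η, Iab k p r (r * t) X a (b + 1) ξ ζ) := by
  have hrs : 2 * r ≤ r * t := by nlinarith
  obtain ⟨C, hC, hpt⟩ := exists_conditioning_pointwise hr ht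
    (Nat.card (Fin r ↪ Fin (r * t))) (Nat.card (Fin 3 ↪ Fin (r * t)))
  refine ⟨2 * C, by positivity, fun X p hp a b ξ η => ?_⟩
  set s := r * t
  set q := (p : ℝ) ^ (2 * (s : ℝ) / 3 - 1)
  set A := Fexp k p r X a ξ
  set B := Fexp k p r X b η
  set f := fexp k p X b η
  let g : liftClasses p b η → (Fin k → ℝ) → ℂ := fun ζ => fexp k p X (b + 1) ζ
  have cA : Continuous A := continuous_Fexp _ _ _ _ _ _
  have cB : Continuous B := continuous_Fexp _ _ _ _ _ _
  have cf : Continuous f := continuous_fexp _ _ _ _ _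
  have cg : ∀ ζ, Continuous (g ζ) := fun ζ => continuous_fexp _ _ _ _ _
  obtain ⟨D, hD, hfD⟩ := exists_pow_add_eq (σ := Fin s) (natTrigPoly k) g
    (fun ζ => fexp_mem_natTrigPoly _ _ _ _ _) (r := r) (by simpa using hrs)
  have hBg : B = condSum g (fun u : Fin r → liftClasses p b η => Function.Injective u) :=
    Fexp_eq_condSum k p r X b η
  have hfg : f = ∑ ζ, g ζ := fexp_eq_sum_liftClasses k hp X b η
  rw [← hBg, ← hfg, Fintype.card_fin] at hfD
  set N₁ := Nat.card (Fin r ↪ Fin s)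
  set N₂ := Nat.card (Fin 3 ↪ Fin s) with hN₂
  have hDnn := re_setIntegral_box_nonneg (mul_mem (mul_mem (mul_mem
    (Fexp_mem_natTrigPoly k p r X a ξ) (star_mem_natTrigPoly (Fexp_mem_natTrigPoly k p r X a ξ)))
    (pow_mem (star_mem_natTrigPoly (fexp_mem_natTrigPoly k p X b η)) s)) hD)
  have cD : Continuous D := continuous_of_mem_natTrigPoly hD
  let U : (Fin k → ℝ) → ℝ := fun α => ‖A α‖ ^ 2 * ‖f α‖ ^ (2 * s)
  let V : (Fin k → ℝ) → ℝ := fun α => ‖A α‖ ^ 2 * ‖B α‖ ^ (2 * t)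
  let W : liftClasses p b η → (Fin k → ℝ) → ℝ := fun ζ α => ‖A α‖ ^ 2 * ‖g ζ α‖ ^ (2 * s)
  have iU : IntegrableOn U (box k) := integrableOn_box (by fun_prop)
  have iV : IntegrableOn V (box k) := integrableOn_box (by fun_prop)
  have iW : ∀ ζ, IntegrableOn (W ζ) (box k) := fun ζ =>
    integrableOn_box ((cA.norm.pow 2).mul ((cg ζ).norm.pow _))
  have iH : IntegrableOn (A * star A * star f ^ s * D) (box k) :=
    integrableOn_box (((cA.mul cA.star).mul (cf.star.pow s)).mul cD)
  have hpoint : ∀ α, U α + ((A * star A * star f ^ s * D) α).re ≤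
      1 / 2 * U α + C * (V α + q * ∑ ζ, W ζ α) := by
    intro α
    have hUα : ((U α : ℝ) : ℂ) = A α * star (A α) * star (f α) ^ s * f α ^ s := by
      have h1 : A α * star (A α) = ((‖A α‖ ^ 2 : ℝ) : ℂ) := by
        rw [Complex.star_def, Complex.mul_conj']
        push_cast
        rfl
      have h2 : star (f α) * f α = ((‖f α‖ ^ 2 : ℝ) : ℂ) := by
        rw [Complex.star_def, Complex.conj_mul']
        push_cast
        rfl
      rw [h1, mul_assoc, ← mul_pow, h2]
      push_cast [U]
      rw [pow_mul]
    have hfα : f α ^ s + D α = N₁ * (B α * f α ^ (s - r)) +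
        N₂ * ((∑ ζ, g ζ α ^ 3) * f α ^ (s - 3)) := by
      simpa using congrFun hfD α
    have hsum : U α + ((A * star A * star f ^ s * D) α).re =
        (A α * star (A α) * star (f α) ^ s * (N₁ * (B α * f α ^ (s - r)) +
          N₂ * ((∑ ζ, g ζ α ^ 3) * f α ^ (s - 3)))).re := by
      rw [← hfα, mul_add, ← hUα, Complex.add_re, Complex.ofReal_re]
      rfl
    have hN : (N₂ : ℝ) * (‖∑ ζ, g ζ α ^ 3‖ * ‖f α‖ ^ (s + (s - 3))) =
        N₂ * (‖∑ ζ, g ζ α ^ 3‖ * ‖f α‖ ^ (2 * s - 3)) := by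
      by_cases h3 : 3 ≤ s
      · congr 3
        lia
      · have : N₂ = 0 := by
          rw [hN₂, Nat.card_eq_fintype_card, Fintype.card_embedding_eq, Fintype.card_fin,
            Fintype.card_fin, Nat.descFactorial_eq_zero_iff_lt]
          lia
        simp [this]
    rw [hsum]
    refine (Complex.re_le_norm _).trans ?_
    have hcard : Fintype.card (liftClasses p b η) ≤ p := by
      simpa using card_liftClasses_le hp b η
    have key := mul_le_mul_of_nonneg_left
      (hpt p (liftClasses p b η) hcard (fun ζ => g ζ α) ‖f α‖ ‖B α‖ (norm_nonneg _) (norm_nonneg _))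
      (sq_nonneg ‖A α‖)
    calc _ ≤ ‖A α‖ ^ 2 * ‖f α‖ ^ s * (N₁ * (‖B α‖ * ‖f α‖ ^ (s - r)) +
          N₂ * (‖∑ ζ, g ζ α ^ 3‖ * ‖f α‖ ^ (s - 3))) := by
          rw [norm_mul, norm_mul, norm_mul, norm_pow, norm_star, norm_star, ← sq]
          gcongr
          refine (norm_add_le _ _).trans (le_of_eq ?_)
          simp
      _ = ‖A α‖ ^ 2 * (N₁ * (‖B α‖ * ‖f α‖ ^ (2 * s - r)) +
          N₂ * (‖∑ ζ, g ζ α ^ 3‖ * ‖f α‖ ^ (2 * s - 3))) := by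
          rw [← hN, show 2 * s - r = s + (s - r) by lia, pow_add, pow_add]
          ring
      _ ≤ _ := key
      _ = _ := by
          simp only [U, V, W, ← Finset.mul_sum]
          ring
  have hint : Iab k p r s X a b ξ η + (∫ α in box k, (A * star A * star f ^ s * D) α).re ≤
      1 / 2 * Iab k p r s X a b ξ η + C * (Kab k p r t X a b ξ η +
        q * ∑ ζ : liftClasses p b η, Iab k p r s X a (b + 1) ξ ζ) := by
    have hre : (∫ α in box k, (A * star A * star f ^ s * D) α).re =
        ∫ α in box k, ((A * star A * star f ^ s * D) α).re := by
      simpa using (integral_re iH).symm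
    have iWs : IntegrableOn (fun α => ∑ ζ, W ζ α) (box k) :=
      integrable_finsetSum _ fun ζ _ => iW ζ
    have iHre : IntegrableOn (fun α => ((A * star A * star f ^ s * D) α).re) (box k) := iH.re
    have iR : IntegrableOn (fun α => C * (V α + q * ∑ ζ, W ζ α)) (box k) :=
      (iV.add (iWs.const_mul q)).const_mul C
    have hmono := integral_mono (iU.add iHre) ((iU.const_mul (1 / 2)).add iR) hpoint
    have eL : ∫ α in box k, (U α + ((A * star A * star f ^ s * D) α).re) =
        Iab k p r s X a b ξ η + (∫ α in box k, (A * star A * star f ^ s * D) α).re := by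
      rw [hre, integral_add iU iHre]
      rfl
    have eR : ∫ α in box k, (1 / 2 * U α + C * (V α + q * ∑ ζ, W ζ α)) =
        1 / 2 * Iab k p r s X a b ξ η + C * (Kab k p r t X a b ξ η +
          q * ∑ ζ : liftClasses p b η, Iab k p r s X a (b + 1) ξ ζ) := by
      rw [integral_add (iU.const_mul (1 / 2)) iR, integral_const_mul, integral_const_mul,
        integral_add iV (iWs.const_mul q), integral_const_mul,
        integral_finsetSum _ fun ζ _ => iW ζ]
      rfl
    rw [← eL, ← eR]
    exact hmono
  linarith

lemma Iab_nonneg (k p r s : ℕ) (X : ℝ) (a b : ℕ) (ξ η : ℤ) : 0 ≤ Iab k p r s X a b ξ η :=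
  integral_nonneg fun _ => by positivity

lemma Kab_nonneg (k p r t : ℕ) (X : ℝ) (a b : ℕ) (ξ η : ℤ) : 0 ≤ Kab k p r t X a b ξ η :=
  integral_nonneg fun _ => by positivity

lemma bddAbove_admissible (φ : ℤ → ℤ → ℝ) (p A B : ℤ) :
    BddAbove {v : ℝ | ∃ ξ η : ℤ, 1 ≤ ξ ∧ ξ ≤ A ∧ 1 ≤ η ∧ η ≤ B ∧
      ¬ Int.ModEq p η ξ ∧ v = φ ξ η} := by
  refine (((Set.finite_Icc 1 A).prod (Set.finite_Icc 1 B)).image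
    fun z : ℤ × ℤ => φ z.1 z.2).bddAbove.mono ?_
  rintro v ⟨ξ, η, h1, h2, h3, h4, -, rfl⟩
  exact ⟨(ξ, η), ⟨⟨h1, h2⟩, ⟨h3, h4⟩⟩, rfl⟩

lemma Imax_nonneg (k p r s : ℕ) (X : ℝ) (a b : ℕ) : 0 ≤ Imax k p r s X a b := by
  refine Real.sSup_nonneg ?_
  rintro v ⟨ξ, η, -, -, -, -, -, rfl⟩
  exact Iab_nonneg _ _ _ _ _ _ _ _ _

lemma Iab_le_Imax (k p r s : ℕ) (X : ℝ) (a b : ℕ) {ξ η : ℤ} (hξ : 1 ≤ ξ ∧ ξ ≤ (p : ℤ) ^ a)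
    (hη : 1 ≤ η ∧ η ≤ (p : ℤ) ^ b) (h : ¬ Int.ModEq (p : ℤ) η ξ) :
    Iab k p r s X a b ξ η ≤ Imax k p r s X a b :=
  le_csSup (bddAbove_admissible (fun ξ η => Iab k p r s X a b ξ η) _ _ _)
    ⟨ξ, η, hξ.1, hξ.2, hη.1, hη.2, h, rfl⟩

lemma Kab_le_Kmax (k p r t : ℕ) (X : ℝ) {a : ℕ} (ha : a ≠ 0) (b : ℕ) {ξ η : ℤ}
    (hξ : 1 ≤ ξ ∧ ξ ≤ (p : ℤ) ^ a) (hη : 1 ≤ η ∧ η ≤ (p : ℤ) ^ b)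
    (h : ¬ Int.ModEq (p : ℤ) η ξ) :
    Kab k p r t X a b ξ η ≤ Kmax k p r t X a b := by
  rw [Kmax, if_neg ha]
  exact le_csSup (bddAbove_admissible (fun ξ η => Kab k p r t X a b ξ η) _ _ _)
    ⟨ξ, η, hξ.1, hξ.2, hη.1, hη.2, h, rfl⟩

lemma Kmax_nonneg (k p r t : ℕ) (X : ℝ) {a : ℕ} (ha : a ≠ 0) (b : ℕ) :
    0 ≤ Kmax k p r t X a b := by
  rw [Kmax, if_neg ha]
  refine Real.sSup_nonneg ?_
  rintro v ⟨ξ, η, -, -, -, -, -, rfl⟩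
  exact Kab_nonneg _ _ _ _ _ _ _ _ _

/-- Lemma 4.1: for b > a ≥ 1 one has
I_{a,b}(X) ≤ C (K_{a,b}(X) + M^{2s/3} I_{a,b+1}(X)), with C = C(s,k,r,t). -/
theorem lemma4_1 (k r t : ℕ) (hk : 2 ≤ k)
    (ht1 : max 2 (((k : ℝ) - 1) / 2) ≤ (t : ℝ)) (ht2 : t ≤ k)
    (hr1 : 1 ≤ r) (hr2 : r ≤ k) (hrt : k ≤ r + t) :
    ∃ C : ℝ, 0 < C ∧ ∀ (X M : ℝ), 1 ≤ X → 0 < M →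
      ∀ p : ℕ, p.Prime → M < (p:ℝ) → (p:ℝ) ≤ 2*M →
      ∀ a b : ℕ, 1 ≤ a → a < b →
        Imax k p r (r*t) X a b ≤
          C * (Kmax k p r t X a b +
            M ^ (2*((r*t : ℕ):ℝ)/3) * Imax k p r (r*t) X a (b+1)) := by
  have ht : 2 ≤ t := by exact_mod_cast (le_max_left _ _).trans ht1
  obtain ⟨C, hC, hI⟩ := exists_Iab_le k hr1 ht
  set e : ℝ := 2 * ((r * t : ℕ) : ℝ) / 3
  have he0 : 0 ≤ e := by positivity
  have h2e : (1 : ℝ) ≤ 2 ^ e := Real.one_le_rpow (by norm_num) he0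
  refine ⟨(C + 1) * 2 ^ e, by positivity, fun X M _ hM p hp _ hpM a b ha hab => ?_⟩
  have ha0 : a ≠ 0 := by lia
  have hK0 := Kmax_nonneg k p r t X ha0 b
  have hI0 := Imax_nonneg k p r (r * t) X a (b + 1)
  have hp0 : (0 : ℝ) < p := by exact_mod_cast hp.pos
  refine Real.sSup_le ?_ (by positivity)
  rintro v ⟨ξ, η, hξ1, hξ2, hη1, hη2, hne, rfl⟩
  have hsum : ∑ ζ : liftClasses p b η, Iab k p r (r * t) X a (b + 1) ξ ζ ≤
      p * Imax k p r (r * t) X a (b + 1) := by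
    refine (Finset.sum_le_card_nsmul _ _ (Imax k p r (r * t) X a (b + 1)) ?_).trans ?_
    · intro ζ _
      have hζ := mem_liftClasses.1 ζ.2
      refine Iab_le_Imax _ _ _ _ _ _ _ ⟨hξ1, hξ2⟩ hζ.1 fun h => hne ?_
      exact (hζ.2.of_dvd (dvd_pow_self _ (by lia))).symm.trans h
    · rw [nsmul_eq_mul]
      refine mul_le_mul_of_nonneg_right ?_ hI0
      have := card_liftClasses_le hp.pos b η
      rw [Finset.card_univ, Fintype.card_coe]
      exact_mod_cast this
  have hpow : (p : ℝ) ^ (e - 1) * p ≤ 2 ^ e * M ^ e := by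
    rw [← Real.rpow_add_one hp0.ne', sub_add_cancel, ← Real.mul_rpow (by norm_num) hM.le]
    exact Real.rpow_le_rpow hp0.le hpM he0
  have hKle := Kab_le_Kmax k p r t X ha0 b ⟨hξ1, hξ2⟩ ⟨hη1, hη2⟩ hne
  calc Iab k p r (r * t) X a b ξ η
      ≤ C * (Kab k p r t X a b ξ η + (p : ℝ) ^ (e - 1) *
          ∑ ζ : liftClasses p b η, Iab k p r (r * t) X a (b + 1) ξ ζ) := hI X p hp.pos a b ξ η
    _ ≤ C * (Kmax k p r t X a b +
          (p : ℝ) ^ (e - 1) * (p * Imax k p r (r * t) X a (b + 1))) := by gcongr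
    _ = C * (Kmax k p r t X a b +
          (p : ℝ) ^ (e - 1) * p * Imax k p r (r * t) X a (b + 1)) := by ring
    _ ≤ (C + 1) * (2 ^ e * Kmax k p r t X a b +
          2 ^ e * M ^ e * Imax k p r (r * t) X a (b + 1)) := by
        gcongr
        · linarith
        · exact le_mul_of_one_le_left hK0 h2e
    _ = _ := by ring

end
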